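/- Let P₂ be the finite strict partial order with seven elements u, p₀, p₁, q₀, q₁, q₂, s, whose strict order is generated transitively by: u below p₀, p₁, q₀, q₁, q₂ and s; p₀ and p₁ each below q₀, q₁, q₂ and below s; q₀, q₁, q₂ each below s; with p₀, p₁ incomparable to each other and q₀, q₁, q₂ pairwise incomparable. Let F be either ℝ or ℚ. On F³ let ⊑ be the 3-dimensional causal order ((u,v,t) ⊑ (u',v',t') iff √((u'−u)²+(v'−v)²) ≤ t'−t) and ⊏ its irreflexive part; on F² let ≤ be the componentwise order and < its irreflexive part. Then the temporal formula Δ(P₂) is satisfiable over (F³, ⊑) and over (F³, ⊏), but it is not satisfiable over (F², ≤) and not satisfiable over (F², <). -/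

import Mathlib

namespace Temporal

/-- Temporal propositional formulas: `φ ::= q | ¬φ | φ∨φ' | Fφ | Pφ`. -/
inductive TForm : Type
  | prop : ℕ → TForm
  | neg : TForm → TForm
  | or : TForm → TForm → TForm
  | fut : TForm → TForm
  | past : TForm → TForm
  deriving DecidableEq

/-- Truth of a temporal formula at a point of a Kripke structure. -/
def TSat {X : Type*} (R : X → X → Prop) (v : ℕ → Set X) : TForm → X → Prop
  | .prop n, x => x ∈ v n
  | .neg φ, x => ¬ TSat R v φ x
  | .or φ ψ, x => TSat R v φ x ∨ TSat R v ψ x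
  | .fut φ, x => ∃ y, R x y ∧ TSat R v φ y
  | .past φ, x => ∃ y, R y x ∧ TSat R v φ y

/-- Validity of a temporal formula over a Kripke frame. -/
def TValid {X : Type*} (R : X → X → Prop) (φ : TForm) : Prop :=
  ∀ (v : ℕ → Set X) (x : X), TSat R v φ x

/-- Satisfiability of a temporal formula over a Kripke frame. -/
def TSatisfiable {X : Type*} (R : X → X → Prop) (φ : TForm) : Prop :=
  ∃ (v : ℕ → Set X) (x : X), TSat R v φ x

/-- An explicit encoding of temporal formulas as natural numbers. -/
def encodeT : TForm → ℕ
  | .prop n => 5 * n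
  | .neg φ => 5 * encodeT φ + 1
  | .or φ ψ => 5 * Nat.pair (encodeT φ) (encodeT ψ) + 2
  | .fut φ => 5 * encodeT φ + 3
  | .past φ => 5 * encodeT φ + 4

/-- The inverse decoding of natural numbers as temporal formulas. -/
def decodeT (n : ℕ) : TForm :=
  if h0 : n % 5 = 0 then .prop (n / 5)
  else
    have hn : 0 < n := Nat.pos_of_ne_zero (by rintro rfl; simp at h0)
    have hlt : n / 5 < n := Nat.div_lt_self hn (by norm_num)
    have h1 : (n / 5).unpair.1 < n := lt_of_le_of_lt (Nat.unpair_left_le _) hlt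
    have h2 : (n / 5).unpair.2 < n := lt_of_le_of_lt (Nat.unpair_right_le _) hlt
    if n % 5 = 1 then .neg (decodeT (n / 5))
    else if n % 5 = 2 then .or (decodeT (n / 5).unpair.1) (decodeT (n / 5).unpair.2)
    else if n % 5 = 3 then .fut (decodeT (n / 5))
    else .past (decodeT (n / 5))

theorem decodeT_encodeT (φ : TForm) : decodeT (encodeT φ) = φ := by
  induction φ with
  | prop n => rw [encodeT, decodeT]; simp [Nat.mul_div_cancel_left, Nat.mul_mod_right]
  | neg φ ih => rw [encodeT, decodeT]; simp [Nat.mul_add_mod, Nat.mul_add_div, ih]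
  | or φ ψ ih1 ih2 => rw [encodeT, decodeT]; simp [Nat.mul_add_mod, Nat.mul_add_div, ih1, ih2]
  | fut φ ih => rw [encodeT, decodeT]; simp [Nat.mul_add_mod, Nat.mul_add_div, ih]
  | past φ ih => rw [encodeT, decodeT]; simp [Nat.mul_add_mod, Nat.mul_add_div, ih]

theorem encodeT_decodeT (n : ℕ) : encodeT (decodeT n) = n := by
  induction n using Nat.strong_induction_on with
  | _ n ih =>
    rw [decodeT]
    by_cases h0 : n % 5 = 0
    · simp only [h0, dif_pos]
      rw [encodeT]
      omega
    · have hn : 0 < n := Nat.pos_of_ne_zero (by rintro rfl; simp at h0)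
      have hlt : n / 5 < n := Nat.div_lt_self hn (by norm_num)
      have h1 : (n / 5).unpair.1 < n := lt_of_le_of_lt (Nat.unpair_left_le _) hlt
      have h2 : (n / 5).unpair.2 < n := lt_of_le_of_lt (Nat.unpair_right_le _) hlt
      rw [dif_neg h0]
      by_cases e1 : n % 5 = 1
      · rw [if_pos e1, encodeT, ih _ hlt]
        omega
      · rw [if_neg e1]
        by_cases e2 : n % 5 = 2
        · rw [if_pos e2, encodeT, ih _ h1, ih _ h2, Nat.pair_unpair]
          omega
        · rw [if_neg e2]
          by_cases e3 : n % 5 = 3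
          · rw [if_pos e3, encodeT, ih _ hlt]
            omega
          · rw [if_neg e3, encodeT, ih _ hlt]
            omega

instance : Encodable TForm :=
  ⟨encodeT, fun n => some (decodeT n), fun φ => congrArg some (decodeT_encodeT φ)⟩

instance : Denumerable TForm :=
  ⟨fun n => ⟨decodeT n, rfl, encodeT_decodeT n⟩⟩


/-- Conjunction, defined from negation and disjunction. -/
def TForm.and (a b : TForm) : TForm := .neg (.or (.neg a) (.neg b))

/-- Implication, defined from negation and disjunction. -/
def TForm.imp (a b : TForm) : TForm := .or (.neg a) b

/-- The operator `G = ¬F¬`. -/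
def TForm.G (a : TForm) : TForm := .neg (.fut (.neg a))

/-- The operator `H = ¬P¬`. -/
def TForm.H (a : TForm) : TForm := .neg (.past (.neg a))

/-- Disjunction of a list of formulas (`⊥` for the empty list). -/
def bigOr : List TForm → TForm
  | [] => TForm.neg (.or (.prop 0) (.neg (.prop 0)))
  | [a] => a
  | a :: rest => .or a (bigOr rest)

/-- Conjunction of a list of formulas (`⊤` for the empty list). -/
def bigAnd : List TForm → TForm
  | [] => TForm.or (.prop 0) (.neg (.prop 0))
  | [a] => a
  | a :: rest => TForm.and a (bigAnd rest)

/-- The formula `Δ(P)` of a finite transitive relation `P` (on `Fin n`, with a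
distinct propositional variable for each element):
`Δ(P) = G H [ ⋁_{p} p ∧ ⋀_{p≠q} ¬(p∧q) ∧ ⋀_{p≠q, p<q} ((p→Fq)∧(q→Pp))
∧ ⋀_{p≠q, ¬(p<q)} ((p→G¬q)∧(q→H¬p)) ]`. -/
def delta (n : ℕ) (lt : Fin n → Fin n → Bool) : TForm :=
  TForm.G (TForm.H (TForm.and
    (bigOr ((List.finRange n).map fun p => .prop p.val))
    (bigAnd ((List.finRange n).flatMap fun p =>
      (List.finRange n).flatMap fun q =>
        if p = q then [] else
          [TForm.and (.neg (TForm.and (.prop p.val) (.prop q.val)))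
            (if lt p q then
              TForm.and (TForm.imp (.prop p.val) (.fut (.prop q.val)))
                (TForm.imp (.prop q.val) (.past (.prop p.val)))
            else
              TForm.and (TForm.imp (.prop p.val) (TForm.G (.neg (.prop q.val))))
                (TForm.imp (.prop q.val) (TForm.H (.neg (.prop p.val)))))]))))

/-- The strict partial order `P₂`: elements `0 = u`, `1 = p₀`, `2 = p₁`,
`3 = q₀`, `4 = q₁`, `5 = q₂`, `6 = s`; `u` below all others, `p₀, p₁` below
`q₀, q₁, q₂, s`, and `q₀, q₁, q₂` below `s`, with `p₀, p₁` incomparable and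
`q₀, q₁, q₂` pairwise incomparable. -/
def ltP2 (a b : Fin 7) : Bool :=
  (a.val == 0 && b.val != 0) ||
    (decide (1 ≤ a.val) && decide (a.val ≤ 2) && decide (3 ≤ b.val)) ||
    (decide (3 ≤ a.val) && decide (a.val ≤ 5) && b.val == 6)

/-- The 3-dimensional causal order on ℝ³. -/
def caus3R (p q : ℝ × ℝ × ℝ) : Prop :=
  Real.sqrt ((q.1 - p.1) ^ 2 + (q.2.1 - p.2.1) ^ 2) ≤ q.2.2 - p.2.2

/-- The 3-dimensional causal order on ℚ³. -/
def caus3Q (p q : ℚ × ℚ × ℚ) : Prop :=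
  Real.sqrt (((q.1 : ℝ) - (p.1 : ℝ)) ^ 2 + ((q.2.1 : ℝ) - (p.2.1 : ℝ)) ^ 2) ≤
    (q.2.2 : ℝ) - (p.2.2 : ℝ)


theorem TSat_and {X : Type*} (R : X → X → Prop) (v : ℕ → Set X) (a b : TForm) (x : X) :
    TSat R v (TForm.and a b) x ↔ TSat R v a x ∧ TSat R v b x := by
  simp [TForm.and, TSat]

theorem TSat_imp {X : Type*} (R : X → X → Prop) (v : ℕ → Set X) (a b : TForm) (x : X) :
    TSat R v (TForm.imp a b) x ↔ (TSat R v a x → TSat R v b x) := by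
  simp [TForm.imp, TSat, imp_iff_not_or]

theorem TSat_G {X : Type*} (R : X → X → Prop) (v : ℕ → Set X) (a : TForm) (x : X) :
    TSat R v (TForm.G a) x ↔ ∀ y, R x y → TSat R v a y := by
  simp [TForm.G, TSat]

theorem TSat_H {X : Type*} (R : X → X → Prop) (v : ℕ → Set X) (a : TForm) (x : X) :
    TSat R v (TForm.H a) x ↔ ∀ y, R y x → TSat R v a y := by
  simp [TForm.H, TSat]

theorem TSat_bigOr {X : Type*} (R : X → X → Prop) (v : ℕ → Set X) (l : List TForm) (x : X) :
    TSat R v (bigOr l) x ↔ ∃ a ∈ l, TSat R v a x := by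
  induction l with
  | nil => simp [bigOr, TSat]
  | cons a l ih =>
    cases l with
    | nil => simp [bigOr]
    | cons b l => rw [bigOr, TSat, ih]; simp; simp

theorem TSat_bigAnd {X : Type*} (R : X → X → Prop) (v : ℕ → Set X) (l : List TForm) (x : X) :
    TSat R v (bigAnd l) x ↔ ∀ a ∈ l, TSat R v a x := by
  induction l with
  | nil => simp [bigAnd, TSat]; tauto
  | cons a l ih =>
    cases l with
    | nil => simp [bigAnd]
    | cons b l => rw [bigAnd, TSat_and, ih]; simp; simp

/-- The local condition inside `G H`. -/
def Good {X : Type*} (R : X → X → Prop) (v : ℕ → Set X) (n : ℕ) (lt : Fin n → Fin n → Bool)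
    (z : X) : Prop :=
  (∃ p : Fin n, z ∈ v p) ∧ ∀ p q : Fin n, p ≠ q →
    (z ∈ v p → z ∉ v q) ∧
    (lt p q = true → (z ∈ v p → ∃ y, R z y ∧ y ∈ v q) ∧ (z ∈ v q → ∃ y, R y z ∧ y ∈ v p)) ∧
    (lt p q = false → (z ∈ v p → ∀ y, R z y → y ∉ v q) ∧ (z ∈ v q → ∀ y, R y z → y ∉ v p))

theorem TSat_delta {X : Type*} (R : X → X → Prop) (v : ℕ → Set X) (n : ℕ)
    (lt : Fin n → Fin n → Bool) (x : X) :
    TSat R v (delta n lt) x ↔ ∀ y, R x y → ∀ z, R z y → Good R v n lt z := by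
  unfold delta
  rw [TSat_G]
  refine forall_congr' fun y => imp_congr_right fun _ => ?_
  rw [TSat_H]
  refine forall_congr' fun z => imp_congr_right fun _ => ?_
  rw [TSat_and, TSat_bigOr, TSat_bigAnd]
  unfold Good
  refine and_congr ?_ ?_
  · simp [TSat]
  · constructor
    · intro h p q hpq
      have h1 := h _ (List.mem_flatMap.2 ⟨p, List.mem_finRange p,
        List.mem_flatMap.2 ⟨q, List.mem_finRange q, by rw [if_neg hpq]; exact List.mem_singleton.2 rfl⟩⟩)
      rw [TSat_and] at h1
      obtain ⟨h1, h2⟩ := h1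
      refine ⟨?_, ?_, ?_⟩
      · intro hp hq
        apply h1
        rw [TSat_and]
        exact ⟨hp, hq⟩
      · intro hl
        rw [if_pos hl, TSat_and, TSat_imp, TSat_imp] at h2
        exact h2
      · intro hl
        rw [if_neg (by simp [hl]), TSat_and, TSat_imp, TSat_imp, TSat_G, TSat_H] at h2
        exact h2
    · intro h a ha
      obtain ⟨p, -, ha⟩ := List.mem_flatMap.1 ha
      obtain ⟨q, -, ha⟩ := List.mem_flatMap.1 ha
      by_cases hpq : p = q
      · simp [hpq] at ha
      rw [if_neg hpq] at ha
      rw [List.mem_singleton.1 ha]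
      obtain ⟨h1, h2, h3⟩ := h p q hpq
      rw [TSat_and]
      refine ⟨?_, ?_⟩
      · intro h4
        rw [TSat_and] at h4
        exact h1 h4.1 h4.2
      · cases hl : lt p q
        · simp only [Bool.false_eq_true, if_false]
          rw [TSat_and, TSat_imp, TSat_imp, TSat_G, TSat_H]
          exact h3 hl
        · simp only [if_true]
          rw [TSat_and, TSat_imp, TSat_imp]
          exact h2 hl

/-! ### Two dimensions -/

theorem no_label {F : Type*} [LinearOrder F] (v : ℕ → Set (F × F))
    (R : F × F → F × F → Prop) (hR : ∀ x y, R x y → x ≤ y)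
    (hR' : ∀ x y, x ≤ y → x ≠ y → R x y) (x : F × F)
    (H : ∀ z, Good R v 7 ltP2 z) : False := by
  have ex : ∀ z, ∃ p : Fin 7, z ∈ v p := fun z => (H z).1
  have mono : ∀ {z w} (c d : Fin 7), z ≤ w → z ∈ v c → w ∈ v d → c = d ∨ ltP2 c d = true := by
    intro z w c d hzw hz hw
    by_contra! hc
    obtain ⟨hcd, hl⟩ := hc
    obtain ⟨h1, -, h3⟩ := (H z).2 c d hcd
    by_cases hzw' : z = w
    · subst hzw'; exact h1 hz hw
    · exact (h3 (by simpa using hl)).1 hz w (hR' _ _ hzw hzw') hw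
  have up : ∀ {z} (c d : Fin 7), ltP2 c d = true → z ∈ v c → ∃ w, z ≤ w ∧ w ∈ v d := by
    intro z c d hl hz
    have hcd : c ≠ d := by clear * - hl; revert c d; decide
    obtain ⟨w, hw, hw'⟩ := (((H z).2 c d hcd).2.1 hl).1 hz
    exact ⟨w, hR _ _ hw, hw'⟩
  have down : ∀ {z} (c d : Fin 7), ltP2 c d = true → z ∈ v d → ∃ w, w ≤ z ∧ w ∈ v c := by
    intro z c d hl hz
    have hcd : c ≠ d := by clear * - hl; revert c d; decide
    obtain ⟨w, hw, hw'⟩ := (((H z).2 c d hcd).2.1 hl).2 hz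
    exact ⟨w, hR _ _ hw, hw'⟩
  -- a point below two distinct q-points and above a p-point is labelled p
  have meet : ∀ {a z w w'} (p q q' : Fin 7), (p = 1 ∨ p = 2) → (q = 3 ∨ q = 4 ∨ q = 5) →
      (q' = 3 ∨ q' = 4 ∨ q' = 5) → q ≠ q' → a ∈ v p → w ∈ v q → w' ∈ v q' → a ≤ z → z ≤ w →
      z ≤ w' → z ∈ v p := by
    intro a z w w' p q q' hp hq hq' hqq ha hw hw' haz hzw hzw'
    obtain ⟨c, hc⟩ := ex z
    have e1 := mono _ _ haz ha hc
    have e2 := mono _ _ hzw hc hw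
    have e3 := mono _ _ hzw' hc hw'
    have : c = p := by
      clear ha hw hw' hc H ex mono up down
      revert p q q' c; decide
    exact this ▸ hc
  have inc : ∀ {z w}, z ∈ v (1 : Fin 7) → w ∈ v (2 : Fin 7) → ¬ z ≤ w := by
    intro z w hz hw h
    have := mono _ _ h hz hw
    revert this; decide
  have key : ∀ (i j k : Fin 7), (i = 3 ∨ i = 4 ∨ i = 5) → (j = 3 ∨ j = 4 ∨ j = 5) →
      (k = 3 ∨ k = 4 ∨ k = 5) → i ≠ j → j ≠ k → ∀ (a X Y Z : F × F), a ∈ v (1 : Fin 7) →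
      X ∈ v i → Y ∈ v j → Z ∈ v k → a ≤ X → a ≤ Y → a ≤ Z → X.1 < Y.1 → Y.2 < X.2 →
      Y.1 < Z.1 → Z.2 < Y.2 → False := by
    intro i j k hi hj hk hij hjk a X Y Z ha hX hY hZ aX aY aZ h1 h2 h3 h4
    have m1 : (X.1, Y.2) ∈ v (1 : Fin 7) := meet _ _ _ (Or.inl rfl) hi hj hij ha hX hY
      ⟨aX.1, aY.2⟩ ⟨le_refl _, h2.le⟩ ⟨h1.le, le_refl _⟩
    have m2 : (Y.1, Z.2) ∈ v (1 : Fin 7) := meet _ _ _ (Or.inl rfl) hj hk hjk ha hY hZ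
      ⟨aY.1, aZ.2⟩ ⟨le_refl _, h4.le⟩ ⟨h3.le, le_refl _⟩
    obtain ⟨b, hbY, hb⟩ := down 2 j (by clear * - hj; revert j; decide) hY
    obtain ⟨W, hbW, hW⟩ := up 2 i (by clear * - hi; revert i; decide) hb
    have b1 : X.1 ≤ b.1 := by
      by_contra! h
      have := mono (2 : Fin 7) 1 (z := b) (w := (X.1, Y.2)) ⟨h.le, hbY.2⟩ hb m1
      revert this; decide
    have b2 : Z.2 ≤ b.2 := by
      by_contra! h
      have := mono (2 : Fin 7) 1 (z := b) (w := (Y.1, Z.2)) ⟨hbY.1, h.le⟩ hb m2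
      revert this; decide
    have m3 : (min W.1 Y.1, min W.2 Y.2) ∈ v (2 : Fin 7) :=
      meet _ _ _ (Or.inr rfl) hi hj hij hb hW hY ⟨le_min hbW.1 hbY.1, le_min hbW.2 hbY.2⟩
        ⟨min_le_left _ _, min_le_left _ _⟩ ⟨min_le_right _ _, min_le_right _ _⟩
    rcases le_total W.1 Y.1 with h | h
    · rcases le_total W.2 Y.2 with h' | h'
      · have := mono i j (z := W) (w := Y) ⟨h, h'⟩ hW hY
        revert this; clear * - hi hj hij; revert i j; decide
      · exact inc m1 m3 ⟨le_min (b1.trans hbW.1) h1.le, le_min h' le_rfl⟩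
    · rcases le_total W.2 Y.2 with h' | h'
      · exact inc m2 m3 ⟨le_min h le_rfl, le_min (b2.trans hbW.2) h4.le⟩
      · have := mono j i (z := Y) (w := W) ⟨h, h'⟩ hY hW
        revert this; clear * - hi hj hij; revert i j; decide
  -- a p₀-point exists
  have p0 : ∃ a, a ∈ v (1 : Fin 7) := by
    obtain ⟨c, hc⟩ := ex x
    by_cases h : ltP2 c 6 = true
    · obtain ⟨w, -, hw⟩ := up c 6 h hc
      obtain ⟨w, -, hw⟩ := down 1 6 (by decide) hw
      exact ⟨w, hw⟩
    · have : c = 6 := by clear hc; revert c; decide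
      subst this
      obtain ⟨w, -, hw⟩ := down 1 6 (by decide) hc
      exact ⟨w, hw⟩
  obtain ⟨a, ha⟩ := p0
  obtain ⟨X, aX, hX⟩ := up 1 3 (by decide) ha
  obtain ⟨Y, aY, hY⟩ := up 1 4 (by decide) ha
  obtain ⟨Z, aZ, hZ⟩ := up 1 5 (by decide) ha
  have side : ∀ (i j : Fin 7), (i = 3 ∨ i = 4 ∨ i = 5) → (j = 3 ∨ j = 4 ∨ j = 5) → i ≠ j →
      ∀ X Y, X ∈ v i → Y ∈ v j → (X.1 < Y.1 ∧ Y.2 < X.2) ∨ (Y.1 < X.1 ∧ X.2 < Y.2) := by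
    intro i j hi hj hij X Y hX hY
    have n1 : ¬ X ≤ Y := by
      intro h
      have := mono i j h hX hY
      revert this; clear * - hi hj hij; revert i j; decide
    have n2 : ¬ Y ≤ X := by
      intro h
      have := mono j i h hY hX
      revert this; clear * - hi hj hij; revert i j; decide
    rw [Prod.le_def] at n1 n2
    grind
  have s1 := side 3 4 (by decide) (by decide) (by decide) X Y hX hY
  have s2 := side 4 5 (by decide) (by decide) (by decide) Y Z hY hZ
  have s3 := side 3 5 (by decide) (by decide) (by decide) X Z hX hZ
  have k1 := key 3 4 5 (by decide) (by decide) (by decide) (by decide) (by decide) a X Y Z ha hX hY hZ aX aY aZ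
  have k2 := key 5 4 3 (by decide) (by decide) (by decide) (by decide) (by decide) a Z Y X ha hZ hY hX aZ aY aX
  have k3 := key 4 3 5 (by decide) (by decide) (by decide) (by decide) (by decide) a Y X Z ha hY hX hZ aY aX aZ
  have k4 := key 5 3 4 (by decide) (by decide) (by decide) (by decide) (by decide) a Z X Y ha hZ hX hY aZ aX aY
  have k5 := key 3 5 4 (by decide) (by decide) (by decide) (by decide) (by decide) a X Z Y ha hX hZ hY aX aZ aY
  have k6 := key 4 5 3 (by decide) (by decide) (by decide) (by decide) (by decide) a Y Z X ha hY hZ hX aY aZ aX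
  grind

theorem not_sat {F : Type*} [LinearOrder F] [NoMaxOrder F]
    (R : F × F → F × F → Prop) (hR : ∀ x y, R x y → x ≤ y)
    (hR' : ∀ x y, x ≤ y → x ≠ y → R x y) : ¬ TSatisfiable R (delta 7 ltP2) := by
  rintro ⟨v, x, h⟩
  rw [TSat_delta] at h
  refine no_label v R hR hR' x fun z => ?_
  obtain ⟨c, hc⟩ := exists_gt (max x.1 z.1)
  obtain ⟨d, hd⟩ := exists_gt (max x.2 z.2)
  rw [max_lt_iff] at hc hd
  refine h (c, d) (hR' _ _ ⟨hc.1.le, hd.1.le⟩ ?_) z (hR' _ _ ⟨hc.2.le, hd.2.le⟩ ?_)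
  · intro e; rw [e] at hc; exact lt_irrefl _ hc.1
  · intro e; rw [e] at hc; exact lt_irrefl _ hc.2

/-! ### Three dimensions -/

theorem sat_of_label {X : Type*} [Nonempty X] (R : X → X → Prop) (f : X → Fin 7)
    (mono : ∀ z w, R z w → f z = f w ∨ ltP2 (f z) (f w) = true)
    (up : ∀ z d, ltP2 (f z) d = true → ∃ w, R z w ∧ f w = d)
    (down : ∀ z d, ltP2 d (f z) = true → ∃ w, R w z ∧ f w = d) :
    TSatisfiable R (delta 7 ltP2) ∧
    TSatisfiable (fun p q => R p q ∧ p ≠ q) (delta 7 ltP2) := by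
  obtain ⟨x⟩ := ‹Nonempty X›
  have irr : ∀ c : Fin 7, ltP2 c c = false := by decide
  have mem : ∀ z (c : Fin 7), z ∈ (fun n : ℕ => {z : X | (f z).val = n}) c.val ↔ f z = c := by
    intro z c; simp [Fin.ext_iff]
  constructor
  · refine ⟨fun n => {z | (f z).val = n}, x, ?_⟩
    rw [TSat_delta]
    intro _ _ z _
    refine ⟨⟨f z, rfl⟩, fun p q hpq => ?_⟩
    simp only [mem]
    refine ⟨fun h1 h2 => hpq (h1.symm.trans h2), fun hl => ⟨?_, ?_⟩, fun hl => ⟨?_, ?_⟩⟩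
    · rintro rfl; exact up z q hl
    · rintro rfl; exact down z p hl
    · rintro rfl y hy rfl
      rcases mono _ _ hy with h | h
      · exact hpq h
      · simp [hl] at h
    · rintro rfl y hy rfl
      rcases mono _ _ hy with h | h
      · exact hpq h
      · simp [hl] at h
  · refine ⟨fun n => {z | (f z).val = n}, x, ?_⟩
    rw [TSat_delta]
    intro _ _ z _
    refine ⟨⟨f z, rfl⟩, fun p q hpq => ?_⟩
    simp only [mem]
    refine ⟨fun h1 h2 => hpq (h1.symm.trans h2), fun hl => ⟨?_, ?_⟩, fun hl => ⟨?_, ?_⟩⟩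
    · rintro rfl
      obtain ⟨w, hw, rfl⟩ := up z q hl
      exact ⟨w, ⟨hw, fun e => hpq (by rw [e])⟩, rfl⟩
    · rintro rfl
      obtain ⟨w, hw, rfl⟩ := down z p hl
      exact ⟨w, ⟨hw, fun e => hpq (by rw [e])⟩, rfl⟩
    · rintro rfl y ⟨hy, -⟩ rfl
      rcases mono _ _ hy with h | h
      · exact hpq h
      · simp [hl] at h
    · rintro rfl y ⟨hy, -⟩ rfl
      rcases mono _ _ hy with h | h
      · exact hpq h
      · simp [hl] at h

/-- The causal relation over an ordered field, without square roots. -/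
def Cs {F : Type*} [Field F] [LinearOrder F] (p q : F × F × F) : Prop :=
  0 ≤ q.2.2 - p.2.2 ∧ (q.1 - p.1) ^ 2 + (q.2.1 - p.2.1) ^ 2 ≤ (q.2.2 - p.2.2) ^ 2

section field
variable {F : Type*} [Field F] [LinearOrder F] [IsStrictOrderedRing F]

theorem cone_sum {x y t a b c : F} (ht : 0 ≤ t) (h : x ^ 2 + y ^ 2 ≤ t ^ 2) (hc : 0 ≤ c)
    (h' : a ^ 2 + b ^ 2 ≤ c ^ 2) : x * a + y * b ≤ t * c := by
  apply le_of_sq_le_sq _ (mul_nonneg ht hc)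
  have h1 : (x ^ 2 + y ^ 2) * (a ^ 2 + b ^ 2) ≤ t ^ 2 * c ^ 2 :=
    mul_le_mul h h' (by positivity) (by positivity)
  nlinarith [sq_nonneg (x * b - y * a)]

theorem cone_add {x y t a b c : F} (ht : 0 ≤ t) (h : x ^ 2 + y ^ 2 ≤ t ^ 2) (hc : 0 ≤ c)
    (h' : a ^ 2 + b ^ 2 ≤ c ^ 2) : (x + a) ^ 2 + (y + b) ^ 2 ≤ (t + c) ^ 2 := by
  nlinarith [cone_sum ht h hc h']

theorem cone_add_lt {x y t a b c : F} (ht : 0 ≤ t) (h : x ^ 2 + y ^ 2 < t ^ 2) (hc : 0 ≤ c)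
    (h' : a ^ 2 + b ^ 2 ≤ c ^ 2) : (x + a) ^ 2 + (y + b) ^ 2 < (t + c) ^ 2 := by
  nlinarith [cone_sum ht h.le hc h']

theorem Cs.trans {p q r : F × F × F} (h : Cs p q) (h' : Cs q r) : Cs p r := by
  obtain ⟨h1, h2⟩ := h
  obtain ⟨h3, h4⟩ := h'
  refine ⟨by linarith, ?_⟩
  have := cone_add h1 h2 h3 h4
  simpa using this

open Classical in
/-- The labelling of three-dimensional spacetime by `P₂`. -/
noncomputable def lab (χ : F → Fin 3) (z : F × F × F) : Fin 7 :=
  if z.2.2 ^ 2 < z.1 ^ 2 + z.2.1 ^ 2 then 2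
  else if z.2.2 < 0 then 0
  else if z.2.2 = 0 then 1
  else if z.1 ^ 2 + z.2.1 ^ 2 < z.2.2 ^ 2 then 6
  else if χ (z.2.1 / (z.2.2 + z.1)) = 0 then 3
  else if χ (z.2.1 / (z.2.2 + z.1)) = 1 then 4 else 5

/-- Shift of the three colours to labels. -/
def qlab (i : Fin 3) : Fin 7 := if i = 0 then 3 else if i = 1 then 4 else 5

theorem lab_two {χ : F → Fin 3} {x y t : F} (h : t ^ 2 < x ^ 2 + y ^ 2) :
    lab χ (x, y, t) = 2 := by
  simp [lab, h]

theorem lab_zero {χ : F → Fin 3} {x y t : F} (h : x ^ 2 + y ^ 2 ≤ t ^ 2) (ht : t < 0) :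
    lab χ (x, y, t) = 0 := by
  simp [lab, not_lt.2 h, ht]

theorem lab_one {χ : F → Fin 3} : lab χ ((0 : F), (0 : F), (0 : F)) = 1 := by
  simp [lab]

theorem lab_six {χ : F → Fin 3} {x y t : F} (h : x ^ 2 + y ^ 2 < t ^ 2) (ht : 0 < t) :
    lab χ (x, y, t) = 6 := by
  simp [lab, not_lt.2 h.le, not_lt.2 ht.le, ht.ne', h]

theorem lab_q {χ : F → Fin 3} {x y t : F} (h : x ^ 2 + y ^ 2 = t ^ 2) (ht : 0 < t) :
    lab χ (x, y, t) = qlab (χ (y / (t + x))) := by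
  simp [lab, h, not_lt.2 ht.le, ht.ne', qlab]

theorem lab_cases (χ : F → Fin 3) (x y t : F) :
    (t ^ 2 < x ^ 2 + y ^ 2 ∧ lab χ (x, y, t) = 2) ∨
    (x ^ 2 + y ^ 2 ≤ t ^ 2 ∧ t < 0 ∧ lab χ (x, y, t) = 0) ∨
    (x = 0 ∧ y = 0 ∧ t = 0 ∧ lab χ (x, y, t) = 1) ∨
    (x ^ 2 + y ^ 2 < t ^ 2 ∧ 0 < t ∧ lab χ (x, y, t) = 6) ∨
    (x ^ 2 + y ^ 2 = t ^ 2 ∧ 0 < t ∧ lab χ (x, y, t) = qlab (χ (y / (t + x)))) := by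
  rcases lt_or_ge (t ^ 2) (x ^ 2 + y ^ 2) with h | h
  · exact Or.inl ⟨h, lab_two h⟩
  right
  rcases lt_trichotomy t 0 with ht | ht | ht
  · exact Or.inl ⟨h, ht, lab_zero h ht⟩
  · right; left
    subst ht
    have hx : x = 0 := by
      have : x ^ 2 ≤ 0 := by nlinarith [sq_nonneg y]
      exact pow_eq_zero_iff (two_ne_zero) |>.1 (le_antisymm this (sq_nonneg x))
    have hy : y = 0 := by
      have : y ^ 2 ≤ 0 := by nlinarith [sq_nonneg x]
      exact pow_eq_zero_iff (two_ne_zero) |>.1 (le_antisymm this (sq_nonneg y))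
    subst hx; subst hy
    exact ⟨rfl, rfl, rfl, lab_one⟩
  · right; right
    rcases lt_or_eq_of_le h with h | h
    · exact Or.inl ⟨h, ht, lab_six h ht⟩
    · exact Or.inr ⟨h, ht, lab_q h ht⟩

theorem gen_eq {x y t a b c : F} (h : x ^ 2 + y ^ 2 = t ^ 2) (ht : 0 < t)
    (h' : a ^ 2 + b ^ 2 = c ^ 2) (hc : 0 < c) (hR : Cs (x, y, t) (a, b, c)) :
    y / (t + x) = b / (c + a) := by
  obtain ⟨h1, h2⟩ := hR
  simp only at h1 h2
  have h3 : t * c ≤ x * a + y * b := by nlinarith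
  have e : (x * c - a * t) ^ 2 + (y * c - b * t) ^ 2 ≤ 0 := by
    have : (x * c - a * t) ^ 2 + (y * c - b * t) ^ 2
      = (x ^ 2 + y ^ 2) * c ^ 2 + (a ^ 2 + b ^ 2) * t ^ 2 - 2 * (t * c) * (x * a + y * b) := by ring
    rw [this, h, h']
    nlinarith [mul_pos ht hc]
  have ex : x * c = a * t := by
    have : (x * c - a * t) ^ 2 ≤ 0 := by nlinarith [sq_nonneg (y * c - b * t)]
    exact sub_eq_zero.1 (pow_eq_zero_iff (two_ne_zero) |>.1 (le_antisymm this (sq_nonneg _)))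
  have ey : y * c = b * t := by
    have : (y * c - b * t) ^ 2 ≤ 0 := by nlinarith [sq_nonneg (x * c - a * t)]
    exact sub_eq_zero.1 (pow_eq_zero_iff (two_ne_zero) |>.1 (le_antisymm this (sq_nonneg _)))
  have hb : b = y * (c / t) := by field_simp; linarith
  have hca : c + a = (t + x) * (c / t) := by field_simp; linarith
  rw [hb, hca, mul_div_mul_right _ _ (div_pos hc ht).ne']

theorem lab_mono (χ : F → Fin 3) (z w : F × F × F) (h : Cs z w) :
    lab χ z = lab χ w ∨ ltP2 (lab χ z) (lab χ w) = true := by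
  obtain ⟨x, y, t⟩ := z
  obtain ⟨a, b, c⟩ := w
  have hR := h
  obtain ⟨h1, h2⟩ := h
  simp only at h1 h2
  have F1 : 0 ≤ t → x ^ 2 + y ^ 2 ≤ t ^ 2 → a ^ 2 + b ^ 2 ≤ c ^ 2 := by
    intro ht h
    have := cone_add ht h h1 h2
    simpa using this
  have F2 : 0 ≤ t → x ^ 2 + y ^ 2 < t ^ 2 → a ^ 2 + b ^ 2 < c ^ 2 := by
    intro ht h
    have := cone_add_lt ht h h1 h2
    simpa using this
  have B1 : c ≤ 0 → a ^ 2 + b ^ 2 ≤ c ^ 2 → x ^ 2 + y ^ 2 ≤ t ^ 2 := by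
    intro hc h
    have := cone_add (x := -a) (y := -b) (t := -c) (by linarith) (by simpa using h) h1 h2
    have e : ∀ r s : F, (-r + (r - s)) ^ 2 = s ^ 2 := by intros; ring
    simpa only [e] using this
  have q1 : ∀ i, ltP2 0 (qlab i) = true := by decide
  have q2 : ∀ i, ltP2 1 (qlab i) = true := by decide
  have q3 : ∀ i, ltP2 2 (qlab i) = true := by decide
  have q4 : ∀ i, ltP2 (qlab i) 6 = true := by decide
  rcases lab_cases χ x y t with ⟨k, e⟩ | ⟨k, k', e⟩ | ⟨k, k', k'', e⟩ | ⟨k, k', e⟩ | ⟨k, k', e⟩ <;>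
  rcases lab_cases χ a b c with ⟨l, e'⟩ | ⟨l, l', e'⟩ | ⟨l, l', l'', e'⟩ | ⟨l, l', e'⟩ | ⟨l, l', e'⟩ <;>
  rw [e, e']
  · exact Or.inl rfl
  · exact absurd (B1 l'.le l) (not_le.2 k)
  · exact absurd (B1 l''.le (by simp [l, l', l''])) (not_le.2 k)
  · exact Or.inr (by decide)
  · exact Or.inr (q3 _)
  · exact Or.inr (by decide)
  · exact Or.inl rfl
  · exact Or.inr (by decide)
  · exact Or.inr (by decide)
  · exact Or.inr (q1 _)
  · exact absurd (F1 k''.ge (by simp [k, k', k''])) (not_le.2 l)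
  · linarith
  · exact Or.inl rfl
  · exact Or.inr (by decide)
  · exact Or.inr (q2 _)
  · exact absurd (F1 k'.le k.le) (not_le.2 l)
  · linarith
  · linarith
  · exact Or.inl rfl
  · exact absurd l (F2 k'.le k).ne
  · exact absurd (F1 k'.le k.le) (not_le.2 l)
  · linarith
  · linarith
  · exact Or.inr (q4 _)
  · left; rw [gen_eq k k' l l' hR]

/-- Points on the generator with parameter `m`. -/
theorem gen_lab (χ : F → Fin 3) (m r : F) (hr : 0 < r) :
    lab χ (r * (1 - m ^ 2), r * (2 * m), r * (1 + m ^ 2)) = qlab (χ m) := by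
  rw [lab_q (by ring) (by positivity)]
  congr 2
  have : r ≠ 0 := hr.ne'
  have : r * (1 + m ^ 2) + r * (1 - m ^ 2) = r * 2 := by ring
  rw [this]
  field_simp

theorem exists_gen {x y t : F} (h : t ^ 2 < x ^ 2 + y ^ 2) :
    ∃ m : F, 0 < (1 - m ^ 2) * x + 2 * m * y - t * (1 + m ^ 2) := by
  rcases lt_or_ge t x with h1 | h1
  · exact ⟨0, by simpa using h1⟩
  rcases lt_trichotomy (x + t) 0 with h2 | h2 | h2
  · -- m = n * sign, large
    set d := -(x + t) with hd
    have hd0 : 0 < d := by linarith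
    refine ⟨(|y| * 2 + (t - x) + d) / d, ?_⟩
    set m := (|y| * 2 + (t - x) + d) / d with hm
    have hmd : m * d = |y| * 2 + (t - x) + d := by rw [hm, div_mul_cancel₀ _ hd0.ne']
    have hm1 : 1 ≤ m := by
      rw [hm, le_div_iff₀ hd0]
      have := abs_nonneg y
      linarith
    have e : (1 - m ^ 2) * x + 2 * m * y - t * (1 + m ^ 2)
      = m * (m * d) + 2 * m * y - (t - x) := by rw [hd]; ring
    rw [e, hmd]
    have hy := neg_abs_le y
    nlinarith [mul_le_mul_of_nonneg_left hy (by linarith : (0:F) ≤ m),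
      mul_nonneg (by linarith : (0:F) ≤ m - 1) (by linarith : (0:F) ≤ t - x)]
  · have hx : x = -t := by linarith
    subst hx
    have hy : y ≠ 0 := by
      rintro rfl
      simp at h
    refine ⟨(t + 1) / y, ?_⟩
    field_simp
    ring_nf
    positivity
  · refine ⟨y / (x + t), ?_⟩
    have e : (1 - (y / (x + t)) ^ 2) * x + 2 * (y / (x + t)) * y - t * (1 + (y / (x + t)) ^ 2)
      = (x ^ 2 + y ^ 2 - t ^ 2) / (x + t) := by
      field_simp
      ring
    rw [e]
    exact div_pos (by linarith) h2

variable [TopologicalSpace F] [OrderTopology F] [IsTopologicalRing F]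

theorem exists_gen_dense (χ : F → Fin 3) (hχ : ∀ i, Dense {m | χ m = i})
    {x y t : F} (h : t ^ 2 < x ^ 2 + y ^ 2) (i : Fin 3) :
    ∃ m : F, χ m = i ∧ 0 < (1 - m ^ 2) * x + 2 * m * y - t * (1 + m ^ 2) := by
  have ho : IsOpen {m : F | 0 < (1 - m ^ 2) * x + 2 * m * y - t * (1 + m ^ 2)} :=
    isOpen_lt continuous_const (by fun_prop)
  obtain ⟨m, hm, hm'⟩ := (hχ i).inter_open_nonempty _ ho (exists_gen h)
  exact ⟨m, hm', hm⟩

theorem p1_sees_q (χ : F → Fin 3) (hχ : ∀ i, Dense {m | χ m = i})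
    {x y t : F} (h : t ^ 2 < x ^ 2 + y ^ 2) (i : Fin 3) :
    ∃ w, Cs (x, y, t) w ∧ lab χ w = qlab i := by
  obtain ⟨m, rfl, hm⟩ := exists_gen_dense χ hχ h i
  set g := (1 - m ^ 2) * x + 2 * m * y - t * (1 + m ^ 2) with hg
  set N := x ^ 2 + y ^ 2 - t ^ 2 with hN
  have hN0 : 0 < N := by linarith
  set r := N / g + |t| + 1 with hr
  have hNg : 0 < N / g := div_pos hN0 hm
  have hr0 : 0 < r := by positivity
  refine ⟨_, ?_, gen_lab χ m r hr0⟩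
  constructor
  · simp only
    nlinarith [le_abs_self t, mul_nonneg hr0.le (sq_nonneg m)]
  · simp only
    have h1 : N / g * g = N := by field_simp
    have h2 : N ≤ r * g := by
      rw [hr]
      nlinarith [mul_nonneg (abs_nonneg t) hm.le]
    have e : (r * (1 + m ^ 2) - t) ^ 2 - ((r * (1 - m ^ 2) - x) ^ 2 + (r * (2 * m) - y) ^ 2)
      = 2 * (r * g) - N := by rw [hg, hN]; ring
    nlinarith

theorem qlab_cover : ∀ d : Fin 7, d = 0 ∨ d = 1 ∨ d = 2 ∨ d = 6 ∨ ∃ i, d = qlab i := by decide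

theorem lab_up (χ : F → Fin 3) (hχ : ∀ i, Dense {m | χ m = i}) (z : F × F × F) (d : Fin 7)
    (hd : ltP2 (lab χ z) d = true) : ∃ w, Cs z w ∧ lab χ w = d := by
  have Q : ∀ z, (∃ i, lab χ z = qlab i) → ∃ w, Cs z w ∧ lab χ w = 6 := by
    rintro ⟨x, y, t⟩ ⟨i, hi⟩
    have h : x ^ 2 + y ^ 2 = t ^ 2 ∧ 0 < t := by
      rcases lab_cases χ x y t with ⟨k, e⟩ | ⟨k, k', e⟩ | ⟨k, k', k'', e⟩ | ⟨k, k', e⟩ | ⟨k, k', e⟩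
      · rw [e] at hi; exfalso; clear * - hi; revert i; decide
      · rw [e] at hi; exfalso; clear * - hi; revert i; decide
      · rw [e] at hi; exfalso; clear * - hi; revert i; decide
      · rw [e] at hi; exfalso; clear * - hi; revert i; decide
      · exact ⟨k, k'⟩
    refine ⟨(x, y, t + 1), ⟨by simp, by simp⟩, lab_six ?_ ?_⟩
    · nlinarith
    · linarith
  have P : ∀ z, (lab χ z = 1 ∨ lab χ z = 2) → ∀ i, ∃ w, Cs z w ∧ lab χ w = qlab i := by
    rintro ⟨x, y, t⟩ hz i
    have q : ∀ i, qlab i ≠ 1 ∧ qlab i ≠ 2 := by decide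
    rcases lab_cases χ x y t with ⟨k, e⟩ | ⟨k, k', e⟩ | ⟨rfl, rfl, rfl, e⟩ | ⟨k, k', e⟩ | ⟨k, k', e⟩
    · exact p1_sees_q χ hχ k i
    · rw [e] at hz; exact absurd hz (by decide)
    · obtain ⟨m, hm⟩ := (hχ i).nonempty
      have hm : χ m = i := hm
      subst hm
      refine ⟨_, ?_, gen_lab χ m 1 one_pos⟩
      constructor
      · simp only; nlinarith [sq_nonneg m]
      · simp only; exact le_of_eq (by ring)
    · rw [e] at hz; exact absurd hz (by decide)
    · rw [e] at hz; have := q (χ (y / (t + x))); tauto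
  have U1 : ∀ z, lab χ z = 0 → ∃ w, Cs z w ∧ lab χ w = 1 := by
    rintro ⟨x, y, t⟩ hz
    have q : ∀ i, qlab i ≠ 0 := by decide
    rcases lab_cases χ x y t with ⟨k, e⟩ | ⟨k, k', e⟩ | ⟨k, k', k'', e⟩ | ⟨k, k', e⟩ | ⟨k, k', e⟩
    · rw [e] at hz; exact absurd hz (by decide)
    · refine ⟨(0, 0, 0), ⟨?_, ?_⟩, lab_one⟩
      · simpa using k'.le
      · simpa using k
    · rw [e] at hz; exact absurd hz (by decide)
    · rw [e] at hz; exact absurd hz (by decide)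
    · rw [e] at hz; exact absurd hz (q _)
  have U2 : ∀ z, lab χ z = 0 → ∃ w, Cs z w ∧ lab χ w = 2 := by
    rintro ⟨x, y, t⟩ hz
    have q : ∀ i, qlab i ≠ 0 := by decide
    rcases lab_cases χ x y t with ⟨k, e⟩ | ⟨k, k', e⟩ | ⟨k, k', k'', e⟩ | ⟨k, k', e⟩ | ⟨k, k', e⟩
    · rw [e] at hz; exact absurd hz (by decide)
    · have main : ∀ s : F, s ^ 2 = 1 → 0 < s * x - t → ∃ w, Cs (x, y, t) w ∧ lab χ w = 2 := by
        intro s hs h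
        set n := (t ^ 2 + 1) / (s * x - t) with hn
        have hn0 : 0 < n := by positivity
        have hn1 : n * (s * x - t) = t ^ 2 + 1 := by rw [hn, div_mul_cancel₀ _ h.ne']
        refine ⟨(x + n * s, y, t + n), ⟨?_, ?_⟩, lab_two ?_⟩
        · simpa using hn0.le
        · simp [mul_pow, hs]
        · have : (x + n * s) ^ 2 + y ^ 2 - (t + n) ^ 2
            = x ^ 2 + y ^ 2 - t ^ 2 + 2 * (n * (s * x - t)) + n ^ 2 * (s ^ 2 - 1) := by ring
          rw [hn1, hs] at this
          nlinarith [sq_nonneg x, sq_nonneg y, sq_nonneg t]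
      rcases lt_or_ge t x with h | h
      · exact main 1 (by simp) (by linarith)
      · exact main (-1) (by simp) (by linarith)
    · rw [e] at hz; exact absurd hz (by decide)
    · rw [e] at hz; exact absurd hz (by decide)
    · rw [e] at hz; exact absurd hz (q _)
  have Pq : ∀ z, (lab χ z = 0 ∨ lab χ z = 1 ∨ lab χ z = 2) → ∀ i, ∃ w, Cs z w ∧ lab χ w = qlab i := by
    intro z hz i
    rcases hz with hz | hz
    · obtain ⟨w, hw, hw'⟩ := U1 z hz
      obtain ⟨w', h1, h2⟩ := P w (Or.inl hw') i
      exact ⟨w', hw.trans h1, h2⟩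
    · exact P z hz i
  have S : ∀ z, lab χ z ≠ 6 → ∃ w, Cs z w ∧ lab χ w = 6 := by
    intro z hz
    have : (lab χ z = 0 ∨ lab χ z = 1 ∨ lab χ z = 2) ∨ ∃ i, lab χ z = qlab i := by
      have := qlab_cover (lab χ z)
      tauto
    rcases this with h | h
    · obtain ⟨w, hw, hw'⟩ := Pq z h 0
      obtain ⟨w', h1, h2⟩ := Q w ⟨0, hw'⟩
      exact ⟨w', hw.trans h1, h2⟩
    · exact Q z h
  rcases qlab_cover d with rfl | rfl | rfl | rfl | ⟨i, rfl⟩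
  · exfalso; revert hd; generalize lab χ z = c; revert c; decide
  · exact U1 z (by revert hd; generalize lab χ z = c; revert c; decide)
  · exact U2 z (by revert hd; generalize lab χ z = c; revert c; decide)
  · exact S z (by revert hd; generalize lab χ z = c; revert c; decide)
  · exact Pq z (by revert hd; generalize lab χ z = c; revert c i; decide) i

theorem lab_down (χ : F → Fin 3) (hχ : ∀ i, Dense {m | χ m = i}) (z : F × F × F) (d : Fin 7)
    (hd : ltP2 d (lab χ z) = true) : ∃ w, Cs w z ∧ lab χ w = d := by
  obtain ⟨x, y, t⟩ := z
  have N : ∀ r : F, 0 ≤ r → x ^ 2 + y ^ 2 ≤ r ^ 2 → ∃ w, Cs w (x, y, t) ∧ lab χ w = 0 := by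
    intro r hr h
    refine ⟨(x, y, -r - 1 - |t|), ⟨?_, by simp; positivity⟩, lab_zero ?_ ?_⟩
    · simp only; linarith [neg_abs_le t]
    · nlinarith [abs_nonneg t]
    · linarith [abs_nonneg t]
  have U : ∃ w, Cs w (x, y, t) ∧ lab χ w = 0 :=
    N (|x| + |y|) (by positivity) (by
      nlinarith [sq_abs x, sq_abs y, mul_nonneg (abs_nonneg x) (abs_nonneg y)])
  have q0 : ∀ i : Fin 3, ∀ d : Fin 7, ltP2 d (qlab i) = true → d = 0 ∨ d = 1 ∨ d = 2 := by decide
  -- q-points see both p's below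
  have Q : ∀ x y t : F, x ^ 2 + y ^ 2 = t ^ 2 → 0 < t →
      (∃ w, Cs w (x, y, t) ∧ lab χ w = 1) ∧ (∃ w, Cs w (x, y, t) ∧ lab χ w = 2) := by
    intro x y t k k'
    constructor
    · exact ⟨(0, 0, 0), ⟨by simpa using k'.le, by simpa using k.le⟩, lab_one⟩
    · refine ⟨(x, y, 0), ⟨by simpa using k'.le, by simp; positivity⟩, lab_two ?_⟩
      rw [k, zero_pow two_ne_zero]; positivity
  -- s-points see all q's below
  have S : ∀ x y t : F, x ^ 2 + y ^ 2 < t ^ 2 → 0 < t → ∀ m, ∃ r, 0 < r ∧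
      Cs (r * (1 - m ^ 2), r * (2 * m), r * (1 + m ^ 2)) (x, y, t) := by
    intro x y t k k' m
    set D := t ^ 2 - (x ^ 2 + y ^ 2) with hD
    have hD0 : 0 < D := by linarith
    set g := t * (1 + m ^ 2) - (1 - m ^ 2) * x - 2 * m * y with hg
    -- choose r small
    set r := min (t / (1 + m ^ 2)) (D / (2 * (|g| + 1))) with hr
    have hr0 : 0 < r := lt_min (by positivity) (by positivity)
    refine ⟨r, hr0, ?_, ?_⟩
    · have h1 : r ≤ t / (1 + m ^ 2) := min_le_left _ _
      rw [le_div_iff₀ (by positivity)] at h1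
      simp only; linarith
    · have h2 : r ≤ D / (2 * (|g| + 1)) := min_le_right _ _
      rw [le_div_iff₀ (by positivity)] at h2
      simp only
      have e : (t - r * (1 + m ^ 2)) ^ 2 - ((x - r * (1 - m ^ 2)) ^ 2 + (y - r * (2 * m)) ^ 2)
        = D - 2 * (r * g) := by rw [hD, hg]; ring
      nlinarith [mul_le_mul_of_nonneg_left (le_abs_self g) hr0.le]
  rcases lab_cases χ x y t with ⟨k, e⟩ | ⟨k, k', e⟩ | ⟨k, k', k'', e⟩ | ⟨k, k', e⟩ | ⟨k, k', e⟩ <;>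
  rw [e] at hd
  · have : d = 0 := by clear * - hd; revert d; decide
    subst this; exact U
  · exfalso; clear * - hd; revert d; decide
  · have : d = 0 := by clear * - hd; revert d; decide
    subst this; exact U
  · rcases qlab_cover d with rfl | rfl | rfl | rfl | ⟨i, rfl⟩
    · exact U
    · obtain ⟨r, hr, h⟩ := S x y t k k' 0
      obtain ⟨⟨w, h1, h2⟩, -⟩ := Q (r * (1 - 0 ^ 2)) (r * (2 * 0)) (r * (1 + 0 ^ 2)) (by ring) (by simpa using hr)
      exact ⟨w, h1.trans h, h2⟩
    · obtain ⟨r, hr, h⟩ := S x y t k k' 0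
      obtain ⟨-, ⟨w, h1, h2⟩⟩ := Q (r * (1 - 0 ^ 2)) (r * (2 * 0)) (r * (1 + 0 ^ 2)) (by ring) (by simpa using hr)
      exact ⟨w, h1.trans h, h2⟩
    · exact absurd hd (by decide)
    · obtain ⟨m, hm⟩ := (hχ i).nonempty
      have hm : χ m = i := hm
      subst hm
      obtain ⟨r, hr, h⟩ := S x y t k k' m
      exact ⟨_, h, gen_lab χ m r hr⟩
  · rcases q0 _ _ hd with rfl | rfl | rfl
    · exact U
    · exact (Q x y t k k').1
    · exact (Q x y t k k').2

theorem sat3 (χ : F → Fin 3) (hχ : ∀ i, Dense {m | χ m = i}) :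
    TSatisfiable (Cs (F := F)) (delta 7 ltP2) ∧
    TSatisfiable (fun p q : F × F × F => Cs p q ∧ p ≠ q) (delta 7 ltP2) :=
  sat_of_label _ (lab χ) (lab_mono χ) (lab_up χ hχ) (lab_down χ hχ)

end field

/-! ### Dense colourings -/

/-- Colour of a rational: denominator modulo three. -/
def chiQ (q : ℚ) : Fin 3 := Fin.ofNat 3 q.den

theorem exists_den (b k : ℕ) (hb : 2 ≤ b) (x y : ℚ)
    (hk : (b : ℚ) / b ^ k < y - x) : ∃ q : ℚ, x < q ∧ q < y ∧ q.den = b ^ k := by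
  have hb0 : (0 : ℚ) < b := by exact_mod_cast (by omega : 0 < b)
  have hB : (0 : ℚ) < (b : ℚ) ^ k := by positivity
  set c : ℤ := ⌊(x * b ^ k - 1) / b⌋ + 1 with hc
  have c1 : (x * b ^ k - 1) / b < c := by rw [hc]; push_cast; exact Int.lt_floor_add_one _
  have c2 : (c : ℚ) ≤ (x * b ^ k - 1) / b + 1 := by
    rw [hc]; push_cast; linarith [Int.floor_le ((x * (b : ℚ) ^ k - 1) / b)]
  rw [div_lt_iff₀ hb0] at c1
  have c3 : (c : ℚ) * b ≤ x * b ^ k - 1 + b := by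
    have := mul_le_mul_of_nonneg_right c2 hb0.le
    rwa [add_mul, div_mul_cancel₀ _ hb0.ne', one_mul] at this
  have hcop : Nat.Coprime (c * b + 1).natAbs ((b : ℤ) ^ k).natAbs := by
    rw [← Int.isCoprime_iff_nat_coprime]
    apply IsCoprime.pow_right
    exact ⟨1, -c, by ring⟩
  have hq : ((((c * b + 1 : ℤ) : ℚ)) / (((b : ℤ) ^ k : ℤ) : ℚ)).den = b ^ k := by
    have h0 : (0 : ℤ) < (b : ℤ) ^ k := by positivity
    have := Rat.den_div_eq_of_coprime h0 hcop
    exact_mod_cast this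
  refine ⟨_, ?_, ?_, hq⟩
  · push_cast
    rw [lt_div_iff₀ hB]
    linarith
  · push_cast
    rw [div_lt_iff₀ hB] at *
    linarith

theorem exists_chiQ (i : Fin 3) (x y : ℚ) (hxy : x < y) : ∃ q : ℚ, x < q ∧ q < y ∧ chiQ q = i := by
  have hpow : ∀ b : ℕ, 2 ≤ b → ∃ j : ℕ, (b : ℚ) / b ^ (2 * j + 1) < y - x := by
    intro b hb
    have hb0 : (2 : ℚ) ≤ b := by exact_mod_cast hb
    obtain ⟨j, hj⟩ := exists_pow_lt_of_lt_one (sub_pos.2 hxy)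
      (by rw [inv_lt_one₀ (by linarith)]; linarith : (b : ℚ)⁻¹ < 1)
    refine ⟨j, lt_of_le_of_lt ?_ hj⟩
    have : (b : ℚ) / b ^ (2 * j + 1) = (b : ℚ)⁻¹ ^ j * (b : ℚ)⁻¹ ^ j := by
      have : (b : ℚ) ≠ 0 := by linarith
      rw [pow_succ, two_mul, pow_add, inv_pow]
      field_simp
    rw [this]
    have h1 : (b : ℚ)⁻¹ ^ j ≤ 1 := pow_le_one₀ (by positivity) (by
      apply inv_le_one_of_one_le₀; linarith)
    have h2 : 0 ≤ (b : ℚ)⁻¹ ^ j := by positivity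
    nlinarith
  have fin : ∀ b : ℕ, 2 ≤ b → (∀ j : ℕ, Fin.ofNat 3 (b ^ (2 * j + 1)) = i) →
      ∃ q : ℚ, x < q ∧ q < y ∧ chiQ q = i := by
    intro b hb h
    obtain ⟨j, hj⟩ := hpow b hb
    obtain ⟨q, h1, h2, h3⟩ := exists_den b _ hb x y hj
    exact ⟨q, h1, h2, by rw [chiQ, h3, h]⟩
  have hi : i = 0 ∨ i = 1 ∨ i = 2 := by clear * -; revert i; decide
  rcases hi with rfl | rfl | rfl
  · exact fin 3 (by norm_num) (fun j => by ext; simp [pow_succ])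
  · exact fin 4 (by norm_num) (fun j => by ext; simp [Nat.pow_mod])
  · exact fin 2 (by norm_num) (fun j => by
      ext; simp [pow_succ, pow_mul, Nat.mul_mod, Nat.pow_mod])

theorem dense_chiQ (i : Fin 3) : Dense {m | chiQ m = i} := by
  apply dense_of_exists_between
  intro a b hab
  obtain ⟨q, h1, h2, h3⟩ := exists_chiQ i a b hab
  exact ⟨q, h3, h1, h2⟩

open Classical in
/-- Colour of a real. -/
noncomputable def chiR (x : ℝ) : Fin 3 := if h : ∃ q : ℚ, (q : ℝ) = x then chiQ h.choose else 0

theorem chiR_cast (q : ℚ) : chiR q = chiQ q := by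
  have h : ∃ r : ℚ, (r : ℝ) = q := ⟨q, rfl⟩
  rw [chiR, dif_pos h]
  congr 1
  exact_mod_cast h.choose_spec

theorem dense_chiR (i : Fin 3) : Dense {m | chiR m = i} := by
  apply dense_of_exists_between
  intro a b hab
  obtain ⟨r, h1, h2⟩ := exists_rat_btwn hab
  obtain ⟨s, h3, h4⟩ := exists_rat_btwn h2
  obtain ⟨q, h5, h6, h7⟩ := exists_chiQ i r s (by exact_mod_cast h3)
  have h5' : (r : ℝ) < q := by exact_mod_cast h5
  have h6' : (q : ℝ) < s := by exact_mod_cast h6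
  exact ⟨q, by rw [Set.mem_ofPred_eq, chiR_cast, h7], by linarith, by linarith⟩

theorem caus3R_eq : caus3R = Cs (F := ℝ) := by
  funext p q
  rw [caus3R, Cs, Real.sqrt_le_iff]

theorem caus3Q_eq : caus3Q = Cs (F := ℚ) := by
  funext p q
  rw [caus3Q, Cs, Real.sqrt_le_iff]
  norm_cast

/-- For `F = ℝ` and for `F = ℚ`, the formula `Δ(P₂)` is satisfiable over
`(F³, ⊑)` and `(F³, ⊏)` (the 3-dimensional causal order and its irreflexive
part), but not over `(F², ≤)` nor `(F², <)` (the componentwise order and its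
irreflexive part). -/
theorem delta_P2_distinguishes_three_from_two_dimensions :
    TSatisfiable caus3R (delta 7 ltP2) ∧
    TSatisfiable (fun p q : ℝ × ℝ × ℝ => caus3R p q ∧ p ≠ q) (delta 7 ltP2) ∧
    TSatisfiable caus3Q (delta 7 ltP2) ∧
    TSatisfiable (fun p q : ℚ × ℚ × ℚ => caus3Q p q ∧ p ≠ q) (delta 7 ltP2) ∧
    ¬ TSatisfiable (fun p q : ℝ × ℝ => p ≤ q) (delta 7 ltP2) ∧
    ¬ TSatisfiable (fun p q : ℝ × ℝ => p ≤ q ∧ p ≠ q) (delta 7 ltP2) ∧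
    ¬ TSatisfiable (fun p q : ℚ × ℚ => p ≤ q) (delta 7 ltP2) ∧
    ¬ TSatisfiable (fun p q : ℚ × ℚ => p ≤ q ∧ p ≠ q) (delta 7 ltP2) := by
  obtain ⟨r1, r2⟩ := sat3 chiR dense_chiR
  obtain ⟨q1, q2⟩ := sat3 chiQ dense_chiQ
  rw [caus3R_eq, caus3Q_eq]
  exact ⟨r1, r2, q1, q2, not_sat _ (fun _ _ h => h) (fun _ _ h _ => h),
    not_sat _ (fun _ _ h => h.1) (fun _ _ h h' => ⟨h, h'⟩),
    not_sat _ (fun _ _ h => h) (fun _ _ h _ => h),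
    not_sat _ (fun _ _ h => h.1) (fun _ _ h h' => ⟨h, h'⟩)⟩

end Temporal
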